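/- arXiv:1208.1469 — 3 statements merged into one kernel-verified Lean document; each statement's English description precedes it below -/
import Mathlib

section
/- Discrete L^∞–H² embedding in two dimensions: for every periodic grid function φ and every index pair (i,j), |φ(i,j)|² ≤ C₂·‖φ‖_{2,2}², where C₂ = 4·max{1/(L_x·L_y), L_x/L_y, L_y/L_x, (L_x·L_y)/2}; in particular ‖φ‖_∞² ≤ C₂·‖φ‖_{2,2}². -/
open Finset

noncomputable section

/-- Periodic grid functions on an `m × n` grid (indices taken modulo `m` and `n`). -/
abbrev Grid (m n : ℕ) := ZMod m × ZMod n → ℝ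

/-- Forward difference in the `x` direction. -/
def Dx {m n : ℕ} (h : ℝ) (φ : Grid m n) : Grid m n :=
  fun p => (φ (p.1 + 1, p.2) - φ p) / h

/-- Forward difference in the `y` direction. -/
def Dy {m n : ℕ} (h : ℝ) (φ : Grid m n) : Grid m n :=
  fun p => (φ (p.1, p.2 + 1) - φ p) / h

/-- The five-point discrete Laplacian. -/
def lapH {m n : ℕ} (h : ℝ) (φ : Grid m n) : Grid m n :=
  fun p => (φ (p.1 + 1, p.2) + φ (p.1 - 1, p.2) + φ (p.1, p.2 + 1) + φ (p.1, p.2 - 1)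
    - 4 * φ p) / h ^ 2

/-- Discrete `L²` norm. -/
def norm2 {m n : ℕ} [NeZero m] [NeZero n] (h : ℝ) (φ : Grid m n) : ℝ :=
  Real.sqrt (h ^ 2 * ∑ p : ZMod m × ZMod n, φ p ^ 2)

/-- Discrete `L²` norm of the gradient. -/
def gradNorm2 {m n : ℕ} [NeZero m] [NeZero n] (h : ℝ) (φ : Grid m n) : ℝ :=
  Real.sqrt (h ^ 2 * ∑ p : ZMod m × ZMod n, (Dx h φ p ^ 2 + Dy h φ p ^ 2))

/-- Discrete `L^∞` norm. -/
def normInf {m n : ℕ} [NeZero m] [NeZero n] (φ : Grid m n) : ℝ :=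
  ⨆ p : ZMod m × ZMod n, |φ p|

/-- Discrete `H²` norm. -/
def norm22 {m n : ℕ} [NeZero m] [NeZero n] (h : ℝ) (φ : Grid m n) : ℝ :=
  Real.sqrt (norm2 h φ ^ 2 + gradNorm2 h φ ^ 2 + norm2 h (lapH h φ) ^ 2)

lemma oneD_diff (m : ℕ) [NeZero m] (f : ZMod m → ℝ) (i k : ZMod m) :
    (f i - f k) ^ 2 ≤ m * ∑ l, (f (l + 1) - f l) ^ 2 := by
  have key : ∀ t : ℕ, f (k + (t : ZMod m)) - f k
      = ∑ s ∈ range t, (f (k + (s : ZMod m) + 1) - f (k + (s : ZMod m))) := by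
    intro t
    induction t with
    | zero => simp
    | succ t ih =>
      rw [sum_range_succ, ← ih]
      push_cast
      rw [← add_assoc]
      ring
  have h1 : f i - f k = ∑ s ∈ range (i - k).val,
      (f (k + (s : ZMod m) + 1) - f (k + (s : ZMod m))) := by
    rw [← key]
    simp
  have hlt : (i - k).val < m := ZMod.val_lt _
  have hinj : Set.InjOn (fun s : ℕ => k + (s : ZMod m)) (range (i - k).val : Set ℕ) := by
    intro a ha b hb hab
    simp only [coe_range, Set.mem_Iio] at ha hb
    have hab' : (a : ZMod m) = b := add_left_cancel hab
    have := congrArg ZMod.val hab'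
    rwa [ZMod.val_natCast_of_lt (by omega), ZMod.val_natCast_of_lt (by omega)] at this
  have h2 : ∑ s ∈ range (i - k).val,
      (f (k + (s : ZMod m) + 1) - f (k + (s : ZMod m))) ^ 2
      ≤ ∑ l, (f (l + 1) - f l) ^ 2 := by
    rw [← sum_image (f := fun l => (f (l + 1) - f l) ^ 2) hinj]
    exact sum_le_sum_of_subset_of_nonneg (subset_univ _) (fun _ _ _ => sq_nonneg _)
  have h3 := sq_sum_le_card_mul_sum_sq (s := range (i - k).val)
    (f := fun s : ℕ => f (k + (s : ZMod m) + 1) - f (k + (s : ZMod m)))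
  rw [h1]
  refine h3.trans ?_
  rw [card_range]
  refine mul_le_mul ?_ h2 (sum_nonneg fun _ _ => sq_nonneg _) (by positivity)
  exact_mod_cast hlt.le

lemma oneD (m : ℕ) [NeZero m] (f : ZMod m → ℝ) (i : ZMod m) :
    f i ^ 2 ≤ 2 / m * ∑ l, f l ^ 2 + 2 * m * ∑ l, (f (l + 1) - f l) ^ 2 := by
  have hm : (0 : ℝ) < m := by exact_mod_cast Nat.pos_of_ne_zero (NeZero.ne m)
  set S := ∑ l, (f (l + 1) - f l) ^ 2 with hS
  have h1 : ∀ k ∈ (univ : Finset (ZMod m)), f i ^ 2 ≤ 2 * f k ^ 2 + 2 * (m * S) := by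
    intro k _
    have := oneD_diff m f i k
    nlinarith [sq_nonneg (f i - 2 * f k)]
  have h2 := sum_le_sum h1
  rw [sum_add_distrib, ← mul_sum] at h2
  simp only [sum_const, card_univ, ZMod.card, nsmul_eq_mul] at h2
  have h3 : f i ^ 2 ≤ (2 * ∑ l, f l ^ 2 + m * (2 * (m * S))) / m := by
    rw [le_div_iff₀ hm]; linarith
  refine h3.trans (le_of_eq ?_)
  field_simp

lemma sum_parts {G : Type*} [AddCommGroup G] [Fintype G] (e : G) (u w : G → ℝ) :
    ∑ p, (u p - u (p - e)) * w p = - ∑ p, u p * (w (p + e) - w p) := by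
  have h : ∑ p, u (p - e) * w p = ∑ p, u p * w (p + e) := by
    rw [← Equiv.sum_comp (Equiv.addRight e)]
    simp
  simp only [sub_mul, mul_sub, sum_sub_distrib, h]
  ring

lemma mixed_le {G : Type*} [AddCommGroup G] [Fintype G] (e f : G) (φ : G → ℝ) :
    2 * ∑ p, ((φ (p + e + f) - φ (p + f)) - (φ (p + e) - φ p)) ^ 2
      ≤ ∑ p, (φ (p + e) + φ (p - e) + φ (p + f) + φ (p - f) - 4 * φ p) ^ 2 := by
  let u : G → ℝ := fun p => φ (p + e) - φ p
  let w : G → ℝ := fun p => φ (p + f) + φ (p - f) - 2 * φ p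
  let z : G → ℝ := fun p => u (p + f) - u p
  have h1 := sum_parts e u w
  have h2 := sum_parts f z u
  have h3 : ∀ p, u p * (w (p + e) - w p) = (z p - z (p - f)) * u p := by
    intro p
    simp only [u, w, z, sub_add_cancel]
    rw [show p + e + f = p + f + e by abel, show p + e - f = p - f + e by abel]
    ring
  have h4 : ∑ p, (u p - u (p - e)) * w p = ∑ p, z p ^ 2 := by
    rw [h1, sum_congr rfl (fun p _ => h3 p), h2, neg_neg]
    exact sum_congr rfl fun p _ => by simp only [z]; ring
  have h5 : ∑ p, ((φ (p + e + f) - φ (p + f)) - (φ (p + e) - φ p)) ^ 2 = ∑ p, z p ^ 2 := by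
    refine sum_congr rfl fun p _ => ?_
    simp only [z, u]
    rw [show p + e + f = p + f + e by abel]
  rw [h5, ← h4, mul_sum]
  refine sum_le_sum fun p _ => ?_
  simp only [u, w, sub_add_cancel]
  nlinarith [sq_nonneg (φ (p + e) + φ (p - e) - 2 * φ p),
    sq_nonneg (φ (p + f) + φ (p - f) - 2 * φ p)]

lemma twoD (m n : ℕ) [NeZero m] [NeZero n] (φ : Grid m n) (q : ZMod m × ZMod n) :
    φ q ^ 2 ≤ 4 / (m * n) * ∑ p, φ p ^ 2
      + 4 * m / n * ∑ p : ZMod m × ZMod n, (φ (p.1 + 1, p.2) - φ p) ^ 2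
      + 4 * n / m * ∑ p : ZMod m × ZMod n, (φ (p.1, p.2 + 1) - φ p) ^ 2
      + 2 * m * n * ∑ p : ZMod m × ZMod n, (φ (p.1 + 1, p.2) + φ (p.1 - 1, p.2)
        + φ (p.1, p.2 + 1) + φ (p.1, p.2 - 1) - 4 * φ p) ^ 2 := by
  obtain ⟨i, j⟩ := q
  have hm : (0 : ℝ) < m := by exact_mod_cast Nat.pos_of_ne_zero (NeZero.ne m)
  have hn : (0 : ℝ) < n := by exact_mod_cast Nat.pos_of_ne_zero (NeZero.ne n)
  have h1 := oneD m (fun a => φ (a, j)) i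
  have h2 : ∑ a, φ (a, j) ^ 2 ≤ ∑ a, (2 / n * ∑ b, φ (a, b) ^ 2
      + 2 * n * ∑ b, (φ (a, b + 1) - φ (a, b)) ^ 2) :=
    sum_le_sum fun a _ => oneD n (fun b => φ (a, b)) j
  have h3 : ∑ a, (φ (a + 1, j) - φ (a, j)) ^ 2 ≤
      ∑ a, (2 / n * ∑ b, (φ (a + 1, b) - φ (a, b)) ^ 2
      + 2 * n * ∑ b, ((φ (a + 1, b + 1) - φ (a, b + 1)) - (φ (a + 1, b) - φ (a, b))) ^ 2) :=
    sum_le_sum fun a _ => oneD n (fun b => φ (a + 1, b) - φ (a, b)) j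
  have h4 := mixed_le ((1, 0) : ZMod m × ZMod n) (0, 1) φ
  rw [Fintype.sum_prod_type] at h4
  simp only [Prod.mk_add_mk, add_zero] at h4
  have h5 : ∀ p : ZMod m × ZMod n, φ (p + (1, 0)) + φ (p - (1, 0)) + φ (p + (0, 1))
      + φ (p - (0, 1)) - 4 * φ p = φ (p.1 + 1, p.2) + φ (p.1 - 1, p.2)
        + φ (p.1, p.2 + 1) + φ (p.1, p.2 - 1) - 4 * φ p := by
    rintro ⟨a, b⟩
    simp
  simp only [h5] at h4
  rw [sum_add_distrib, ← mul_sum, ← mul_sum] at h2 h3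
  have e1 := Fintype.sum_prod_type (fun p : ZMod m × ZMod n => φ p ^ 2)
  have e2 := Fintype.sum_prod_type
    (fun p : ZMod m × ZMod n => (φ (p.1 + 1, p.2) - φ p) ^ 2)
  have e3 := Fintype.sum_prod_type
    (fun p : ZMod m × ZMod n => (φ (p.1, p.2 + 1) - φ p) ^ 2)
  rw [e1, e2, e3]
  simp only at h1 ⊢
  have h2' := mul_le_mul_of_nonneg_left h2 (show (0 : ℝ) ≤ 2 / m by positivity)
  have h3' := mul_le_mul_of_nonneg_left h3 (show (0 : ℝ) ≤ 2 * m by positivity)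
  have h4' := mul_le_mul_of_nonneg_left h4 (show (0 : ℝ) ≤ 2 * m * n by positivity)
  refine h1.trans ((add_le_add h2' h3').trans ?_)
  refine le_trans (le_of_eq ?_) (add_le_add_right h4' _)
  field_simp
  ring

lemma pointwise_bound (m n : ℕ) [NeZero m] [NeZero n] (h : ℝ) (hh : 0 < h)
    (φ : Grid m n) (q : ZMod m × ZMod n) :
    |φ q| ^ 2 ≤
        (4 * max (max (1 / (((m : ℝ) * h) * ((n : ℝ) * h))) (((m : ℝ) * h) / ((n : ℝ) * h)))
          (max (((n : ℝ) * h) / ((m : ℝ) * h)) ((((m : ℝ) * h) * ((n : ℝ) * h)) / 2)))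
        * norm22 h φ ^ 2 := by
  have hm : (0 : ℝ) < m := by exact_mod_cast Nat.pos_of_ne_zero (NeZero.ne m)
  have hn : (0 : ℝ) < n := by exact_mod_cast Nat.pos_of_ne_zero (NeZero.ne n)
  have key := twoD m n φ q
  rw [sq_abs]
  generalize hM : max (max (1 / (((m : ℝ) * h) * ((n : ℝ) * h))) (((m : ℝ) * h) / ((n : ℝ) * h)))
          (max (((n : ℝ) * h) / ((m : ℝ) * h)) ((((m : ℝ) * h) * ((n : ℝ) * h)) / 2)) = M
  have b1 : 1 / (((m : ℝ) * h) * ((n : ℝ) * h)) ≤ M := by rw [← hM]; simp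
  have b2 : ((m : ℝ) * h) / ((n : ℝ) * h) ≤ M := by rw [← hM]; simp
  have b3 : ((n : ℝ) * h) / ((m : ℝ) * h) ≤ M := by rw [← hM]; simp
  have b4 : (((m : ℝ) * h) * ((n : ℝ) * h)) / 2 ≤ M := by rw [← hM]; simp
  clear hM
  have n1 : ∀ ψ : Grid m n, norm2 h ψ ^ 2 = h ^ 2 * ∑ p, ψ p ^ 2 := fun ψ =>
    Real.sq_sqrt (mul_nonneg (sq_nonneg _) (sum_nonneg fun _ _ => sq_nonneg _))
  have n2 : gradNorm2 h φ ^ 2 = h ^ 2 * ∑ p, (Dx h φ p ^ 2 + Dy h φ p ^ 2) :=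
    Real.sq_sqrt (mul_nonneg (sq_nonneg _)
      (sum_nonneg fun _ _ => add_nonneg (sq_nonneg _) (sq_nonneg _)))
  have n3 : norm22 h φ ^ 2 = norm2 h φ ^ 2 + gradNorm2 h φ ^ 2 + norm2 h (lapH h φ) ^ 2 :=
    Real.sq_sqrt (by positivity)
  rw [n3, n2, n1, n1]
  simp only [Dx, Dy, lapH, div_pow, sum_add_distrib, ← sum_div]
  have s1 : 0 ≤ ∑ p, φ p ^ 2 := sum_nonneg fun _ _ => sq_nonneg _
  have s2 : 0 ≤ ∑ p : ZMod m × ZMod n, (φ (p.1 + 1, p.2) - φ p) ^ 2 :=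
    sum_nonneg fun _ _ => sq_nonneg _
  have s3 : 0 ≤ ∑ p : ZMod m × ZMod n, (φ (p.1, p.2 + 1) - φ p) ^ 2 :=
    sum_nonneg fun _ _ => sq_nonneg _
  have s4 : 0 ≤ ∑ p : ZMod m × ZMod n, (φ (p.1 + 1, p.2) + φ (p.1 - 1, p.2)
        + φ (p.1, p.2 + 1) + φ (p.1, p.2 - 1) - 4 * φ p) ^ 2 :=
    sum_nonneg fun _ _ => sq_nonneg _
  revert key s1 s2 s3 s4
  generalize (∑ p, φ p ^ 2) = S1
  generalize (∑ p : ZMod m × ZMod n, (φ (p.1 + 1, p.2) - φ p) ^ 2) = S2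
  generalize (∑ p : ZMod m × ZMod n, (φ (p.1, p.2 + 1) - φ p) ^ 2) = S3
  generalize (∑ p : ZMod m × ZMod n, (φ (p.1 + 1, p.2) + φ (p.1 - 1, p.2)
        + φ (p.1, p.2 + 1) + φ (p.1, p.2 - 1) - 4 * φ p) ^ 2) = S4
  intro key s1 s2 s3 s4
  have t1 := mul_le_mul_of_nonneg_right b1 (show 0 ≤ 4 * (h ^ 2 * S1) by positivity)
  have t2 := mul_le_mul_of_nonneg_right b2 (show 0 ≤ 4 * S2 by positivity)
  have t3 := mul_le_mul_of_nonneg_right b3 (show 0 ≤ 4 * S3 by positivity)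
  have t4 := mul_le_mul_of_nonneg_right b4 (show 0 ≤ 4 * (S4 / h ^ 2) by positivity)
  refine key.trans (le_trans (le_of_eq ?_)
    ((add_le_add (add_le_add (add_le_add t1 t2) t3) t4).trans (le_of_eq ?_)))
  · field_simp
    ring
  · field_simp
    ring

/-- Discrete `L^∞`–`H²` embedding in two dimensions, with
`C₂ = 4 max{1/(Lx Ly), Lx/Ly, Ly/Lx, Lx Ly / 2}`, `Lx = m h`, `Ly = n h`. -/
theorem discrete_Linfty_H2_embedding (m n : ℕ) [NeZero m] [NeZero n] (h : ℝ) (hh : 0 < h)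
    (φ : Grid m n) :
    (∀ p : ZMod m × ZMod n,
      |φ p| ^ 2 ≤
        (4 * max (max (1 / (((m : ℝ) * h) * ((n : ℝ) * h))) (((m : ℝ) * h) / ((n : ℝ) * h)))
          (max (((n : ℝ) * h) / ((m : ℝ) * h)) ((((m : ℝ) * h) * ((n : ℝ) * h)) / 2)))
        * norm22 h φ ^ 2) ∧
    normInf φ ^ 2 ≤
      (4 * max (max (1 / (((m : ℝ) * h) * ((n : ℝ) * h))) (((m : ℝ) * h) / ((n : ℝ) * h)))
        (max (((n : ℝ) * h) / ((m : ℝ) * h)) ((((m : ℝ) * h) * ((n : ℝ) * h)) / 2)))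
      * norm22 h φ ^ 2 := by
  refine ⟨pointwise_bound m n h hh φ, ?_⟩
  obtain ⟨q, hq⟩ := exists_eq_ciSup_of_finite (f := fun p : ZMod m × ZMod n => |φ p|)
  have hq' : normInf φ = |φ q| := hq.symm
  rw [hq']
  exact pointwise_bound m n h hh φ q
end
end

section
/- There exist constants C₆ > 0 and C₇ > 0 depending only on α, L_x and L_y (not on h, m, n) such that for every periodic grid function φ: F(φ) ≥ C₆·‖φ‖_∞² − (L_x·L_y)/4 and F(φ) ≥ C₇·‖∇_hφ‖₄² − (L_x·L_y)/4. -/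
open Finset

noncomputable section

/-- Discrete `L⁴` norm. -/
def norm4 {m n : ℕ} [NeZero m] [NeZero n] (h : ℝ) (φ : Grid m n) : ℝ :=
  (h ^ 2 * ∑ p : ZMod m × ZMod n, φ p ^ 4) ^ ((1 : ℝ) / 4)

/-- Discrete `L⁴` norm of the gradient. -/
def gradNorm4 {m n : ℕ} [NeZero m] [NeZero n] (h : ℝ) (φ : Grid m n) : ℝ :=
  (h ^ 2 * ∑ p : ZMod m × ZMod n, (Dx h φ p ^ 4 + Dy h φ p ^ 4)) ^ ((1 : ℝ) / 4)

/-- The discrete MPFC energy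
`F(φ) = ¼‖φ‖₄⁴ + (α/2)‖φ‖₂² − ‖∇ₕφ‖₂² + ½‖Δₕφ‖₂²`. -/
def energyF {m n : ℕ} [NeZero m] [NeZero n] (α h : ℝ) (φ : Grid m n) : ℝ :=
  1 / 4 * norm4 h φ ^ 4 + α / 2 * norm2 h φ ^ 2 - gradNorm2 h φ ^ 2
    + 1 / 2 * norm2 h (lapH h φ) ^ 2

lemma aux_tele {m : ℕ} [NeZero m] (g : ZMod m → ℝ) (j : ZMod m) (d : ℕ) :
    |g (j + (d : ZMod m)) - g j| ≤ ∑ t ∈ Finset.range d, |g (j + (t : ZMod m) + 1) - g (j + (t : ZMod m))| := by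
  induction d with
  | zero => simp
  | succ k ih =>
    rw [Finset.sum_range_succ]
    have h1 : j + ((k + 1 : ℕ) : ZMod m) = j + (k : ZMod m) + 1 := by push_cast; ring
    rw [h1]
    have := abs_add_le (g (j + (k : ZMod m) + 1) - g (j + (k : ZMod m))) (g (j + (k : ZMod m)) - g j)
    rw [sub_add_sub_cancel] at this
    linarith

lemma aux_osc {m : ℕ} [NeZero m] (g : ZMod m → ℝ) (i j : ZMod m) :
    |g i - g j| ≤ ∑ k, |g (k + 1) - g k| := by
  have h1 := aux_tele g j (i - j).val
  rw [ZMod.natCast_zmod_val, add_sub_cancel] at h1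
  refine h1.trans ?_
  have hinj : Set.InjOn (fun t : ℕ => j + (t : ZMod m)) (Finset.range (i - j).val) := by
    intro a ha b hb hab
    have hlt := ZMod.val_lt (i - j)
    simp only [Finset.coe_range, Set.mem_Iio] at ha hb
    have h2 : (a : ZMod m) = (b : ZMod m) := add_left_cancel hab
    have h3 := congrArg ZMod.val h2
    rwa [ZMod.val_natCast_of_lt (by omega), ZMod.val_natCast_of_lt (by omega)] at h3
  rw [← Finset.sum_image (f := fun k => |g (k + 1) - g k|) hinj]
  exact Finset.sum_le_sum_of_subset_of_nonneg (Finset.subset_univ _) (fun _ _ _ => abs_nonneg _)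

lemma aux_sup1 {m : ℕ} [NeZero m] (g : ZMod m → ℝ) (i : ZMod m) :
    |g i| ≤ (1 / (m : ℝ)) * ∑ k, |g k| + ∑ k, |g (k + 1) - g k| := by
  have hm : (0 : ℝ) < m := by exact_mod_cast Nat.pos_of_ne_zero (NeZero.ne m)
  have h1 : ∑ _j : ZMod m, |g i| ≤ ∑ j : ZMod m, (|g j| + ∑ k, |g (k + 1) - g k|) := by
    refine Finset.sum_le_sum fun j _ => ?_
    have h2 := aux_osc g i j
    have h3 := abs_sub_abs_le_abs_sub (g i) (g j)
    linarith
  rw [Finset.sum_add_distrib] at h1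
  simp only [Finset.sum_const, Finset.card_univ, ZMod.card, nsmul_eq_mul] at h1
  rw [← mul_le_mul_iff_right₀ hm]
  calc _ ≤ _ := h1
    _ = _ := by field_simp

/-- unscaled differences -/
def dX {m n : ℕ} (f : Grid m n) : Grid m n := fun p => f (p.1 + 1, p.2) - f p
/-- unscaled differences -/
def dY {m n : ℕ} (f : Grid m n) : Grid m n := fun p => f (p.1, p.2 + 1) - f p

lemma aux_supX {m n : ℕ} [NeZero m] [NeZero n] (f : Grid m n) (i : ZMod m) (j : ZMod n) :
    |f (i, j)| ≤ (1 / (m : ℝ)) * ∑ k, |f (k, j)| + ∑ k, |dX f (k, j)| :=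
  aux_sup1 (fun k => f (k, j)) i

lemma aux_supY {m n : ℕ} [NeZero m] [NeZero n] (f : Grid m n) (i : ZMod m) (j : ZMod n) :
    |f (i, j)| ≤ (1 / (n : ℝ)) * ∑ k, |f (i, k)| + ∑ k, |dY f (i, k)| :=
  aux_sup1 (fun k => f (i, k)) j

lemma aux_sumY {m n : ℕ} [NeZero m] [NeZero n] (f : Grid m n) (j : ZMod n) :
    ∑ k, |f (k, j)| ≤ (1 / (n : ℝ)) * ∑ p, |f p| + ∑ p, |dY f p| := by
  rw [Fintype.sum_prod_type, Fintype.sum_prod_type, Finset.mul_sum, ← Finset.sum_add_distrib]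
  exact Finset.sum_le_sum fun k _ => aux_supY f k j

lemma aux_sup2 {m n : ℕ} [NeZero m] [NeZero n] (f : Grid m n) (p : ZMod m × ZMod n) :
    |f p| ≤ (1 / (m : ℝ)) * ((1 / (n : ℝ)) * ∑ p, |f p| + ∑ p, |dY f p|)
      + ((1 / (n : ℝ)) * ∑ p, |dX f p| + ∑ p, |dY (dX f) p|) := by
  refine (aux_supX f p.1 p.2).trans ?_
  have := aux_sumY f p.2
  have := aux_sumY (dX f) p.2
  gcongr

lemma aux_cs {m n : ℕ} [NeZero m] [NeZero n] (f : Grid m n) :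
    (∑ p, |f p|) ^ 2 ≤ ((m : ℝ) * n) * ∑ p, f p ^ 2 := by
  have := sq_sum_le_card_mul_sum_sq (s := (Finset.univ : Finset (ZMod m × ZMod n))) (f := fun p => |f p|)
  simpa [Finset.card_univ, Fintype.card_prod, ZMod.card] using this

lemma aux_supsq {m n : ℕ} [NeZero m] [NeZero n] (f : Grid m n) (p : ZMod m × ZMod n) :
    f p ^ 2 ≤ 4 * ((1 / ((m : ℝ) * n)) * ∑ p, f p ^ 2 + ((n : ℝ) / m) * ∑ p, dY f p ^ 2
      + ((m : ℝ) / n) * ∑ p, dX f p ^ 2 + ((m : ℝ) * n) * ∑ p, dY (dX f) p ^ 2) := by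
  have hm : (0 : ℝ) < m := by exact_mod_cast Nat.pos_of_ne_zero (NeZero.ne m)
  have hn : (0 : ℝ) < n := by exact_mod_cast Nat.pos_of_ne_zero (NeZero.ne n)
  have h0 := aux_sup2 f p
  set a := ∑ p, |f p|
  set b := ∑ p, |dY f p|
  set c := ∑ p, |dX f p|
  set d := ∑ p, |dY (dX f) p|
  have ha := aux_cs f
  have hb := aux_cs (dY f)
  have hc := aux_cs (dX f)
  have hd := aux_cs (dY (dX f))
  have h1 : f p ^ 2 ≤ (1 / (m : ℝ) * (1 / (n : ℝ) * a + b) + (1 / (n : ℝ) * c + d)) ^ 2 := by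
    rw [← sq_abs]
    gcongr
  have h2 : (1 / (m : ℝ) * (1 / (n : ℝ) * a + b) + (1 / (n : ℝ) * c + d)) ^ 2 ≤
      4 * ((1 / ((m : ℝ) * n)) ^ 2 * a ^ 2 + (1 / (m : ℝ)) ^ 2 * b ^ 2 + (1 / (n : ℝ)) ^ 2 * c ^ 2 + d ^ 2) := by
    have key : ∀ x y z w : ℝ, (x + y + (z + w)) ^ 2 ≤ 4 * (x ^ 2 + y ^ 2 + z ^ 2 + w ^ 2) := by
      intro x y z w
      nlinarith [sq_nonneg (x - y), sq_nonneg (x - z), sq_nonneg (x - w), sq_nonneg (y - z), sq_nonneg (y - w), sq_nonneg (z - w)]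
    have := key (1 / ((m : ℝ) * n) * a) (1 / (m : ℝ) * b) (1 / (n : ℝ) * c) d
    simp only [mul_pow] at this
    refine le_trans (le_of_eq ?_) this
    congr 1
    field_simp
  refine h1.trans (h2.trans ?_)
  have ha' := mul_le_mul_of_nonneg_left ha (sq_nonneg (1 / ((m : ℝ) * n)))
  have hb' := mul_le_mul_of_nonneg_left hb (sq_nonneg (1 / (m : ℝ)))
  have hc' := mul_le_mul_of_nonneg_left hc (sq_nonneg (1 / (n : ℝ)))
  have e1 : ∀ S : ℝ, (1 / ((m : ℝ) * n)) ^ 2 * ((m : ℝ) * n * S) = (1 / ((m : ℝ) * n)) * S := by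
    intro S; field_simp
  have e2 : ∀ S : ℝ, (1 / (m : ℝ)) ^ 2 * ((m : ℝ) * n * S) = ((n : ℝ) / m) * S := by
    intro S; field_simp
  have e3 : ∀ S : ℝ, (1 / (n : ℝ)) ^ 2 * ((m : ℝ) * n * S) = ((m : ℝ) / n) * S := by
    intro S; field_simp
  rw [e1] at ha'
  rw [e2] at hb'
  rw [e3] at hc'
  linarith

lemma aux_shiftX {m n : ℕ} [NeZero m] [NeZero n] (f : Grid m n) :
    ∑ p : ZMod m × ZMod n, f (p.1 + 1, p.2) = ∑ p, f p := by
  have := Equiv.sum_comp (Equiv.addRight ((1, 0) : ZMod m × ZMod n)) f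
  rw [← this]
  refine Finset.sum_congr rfl fun p _ => ?_
  congr 1
  ext <;> simp

lemma aux_shiftY {m n : ℕ} [NeZero m] [NeZero n] (f : Grid m n) :
    ∑ p : ZMod m × ZMod n, f (p.1, p.2 + 1) = ∑ p, f p := by
  have := Equiv.sum_comp (Equiv.addRight ((0, 1) : ZMod m × ZMod n)) f
  rw [← this]
  refine Finset.sum_congr rfl fun p _ => ?_
  congr 1
  ext <;> simp

/-- second difference -/
def ddX {m n : ℕ} (f : Grid m n) : Grid m n :=
  fun p => f (p.1 + 1, p.2) + f (p.1 - 1, p.2) - 2 * f p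
/-- second difference -/
def ddY {m n : ℕ} (f : Grid m n) : Grid m n :=
  fun p => f (p.1, p.2 + 1) + f (p.1, p.2 - 1) - 2 * f p

lemma aux_sbpX {m n : ℕ} [NeZero m] [NeZero n] (f g : Grid m n) :
    ∑ p, f p * ddX g p = - ∑ p, dX f p * dX g p := by
  have h1 := aux_shiftX (fun p => f p * (g p - g (p.1 - 1, p.2)))
  have h2 : ∑ p, f p * ddX g p + ∑ p, dX f p * dX g p =
      ∑ p : ZMod m × ZMod n, f (p.1 + 1, p.2) * (g (p.1 + 1, p.2) - g (p.1 + 1 - 1, p.2))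
        - ∑ p : ZMod m × ZMod n, f p * (g p - g (p.1 - 1, p.2)) := by
    rw [← Finset.sum_add_distrib, ← Finset.sum_sub_distrib]
    refine Finset.sum_congr rfl fun p _ => ?_
    simp only [ddX, dX, add_sub_cancel_right]
    ring
  linarith

lemma aux_sbpY {m n : ℕ} [NeZero m] [NeZero n] (f g : Grid m n) :
    ∑ p, f p * ddY g p = - ∑ p, dY f p * dY g p := by
  have h1 := aux_shiftY (fun p => f p * (g p - g (p.1, p.2 - 1)))
  have h2 : ∑ p, f p * ddY g p + ∑ p, dY f p * dY g p =
      ∑ p : ZMod m × ZMod n, f (p.1, p.2 + 1) * (g (p.1, p.2 + 1) - g (p.1, p.2 + 1 - 1))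
        - ∑ p : ZMod m × ZMod n, f p * (g p - g (p.1, p.2 - 1)) := by
    rw [← Finset.sum_add_distrib, ← Finset.sum_sub_distrib]
    refine Finset.sum_congr rfl fun p _ => ?_
    simp only [ddY, dY, add_sub_cancel_right]
    ring
  linarith

lemma aux_ddX_sq {m n : ℕ} [NeZero m] [NeZero n] (f : Grid m n) :
    ∑ p, ddX f p ^ 2 = ∑ p, dX (dX f) p ^ 2 := by
  rw [← aux_shiftX (fun p => ddX f p ^ 2)]
  refine Finset.sum_congr rfl fun p _ => ?_
  simp only [ddX, dX, add_sub_cancel_right]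
  ring

lemma aux_ddY_sq {m n : ℕ} [NeZero m] [NeZero n] (f : Grid m n) :
    ∑ p, ddY f p ^ 2 = ∑ p, dY (dY f) p ^ 2 := by
  rw [← aux_shiftY (fun p => ddY f p ^ 2)]
  refine Finset.sum_congr rfl fun p _ => ?_
  simp only [ddY, dY, add_sub_cancel_right]
  ring

lemma aux_cross {m n : ℕ} [NeZero m] [NeZero n] (f : Grid m n) :
    ∑ p, ddY f p * ddX f p = ∑ p, dY (dX f) p ^ 2 := by
  rw [aux_sbpX]
  have h : ∀ p, dX (ddY f) p * dX f p = dX f p * ddY (dX f) p := by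
    intro p
    simp only [ddY, dX]
    ring
  simp only [h]
  rw [aux_sbpY, neg_neg]
  exact Finset.sum_congr rfl fun p _ => by ring

lemma aux_comm {m n : ℕ} (f : Grid m n) : dX (dY f) = dY (dX f) := by
  funext p
  simp only [dX, dY]
  ring

lemma aux_lap {m n : ℕ} [NeZero m] [NeZero n] (f : Grid m n) :
    ∑ p, (ddX f p + ddY f p) ^ 2 = ∑ p, dX (dX f) p ^ 2 + 2 * ∑ p, dY (dX f) p ^ 2
      + ∑ p, dY (dY f) p ^ 2 := by
  rw [← aux_cross, ← aux_ddX_sq, ← aux_ddY_sq, Finset.mul_sum, ← Finset.sum_add_distrib,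
    ← Finset.sum_add_distrib]
  exact Finset.sum_congr rfl fun p _ => by ring

lemma aux_grad {m n : ℕ} [NeZero m] [NeZero n] (f : Grid m n) (s : ℝ) (hs : 0 < s) :
    ∑ p, dX f p ^ 2 + ∑ p, dY f p ^ 2 ≤
      s / 2 * ∑ p, f p ^ 2 + 1 / (2 * s) * ∑ p, (ddX f p + ddY f p) ^ 2 := by
  have hx := aux_sbpX f f
  have hy := aux_sbpY f f
  have : ∑ p, dX f p ^ 2 + ∑ p, dY f p ^ 2 = ∑ p, -(f p * (ddX f p + ddY f p)) := by
    simp only [pow_two, mul_add, neg_add, Finset.sum_add_distrib, Finset.sum_neg_distrib]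
    linarith
  rw [this, Finset.mul_sum, Finset.mul_sum, ← Finset.sum_add_distrib]
  refine Finset.sum_le_sum fun p _ => ?_
  have h1 : s / 2 * f p ^ 2 + 1 / (2 * s) * (ddX f p + ddY f p) ^ 2 + f p * (ddX f p + ddY f p)
      = 1 / (2 * s) * (s * f p + (ddX f p + ddY f p)) ^ 2 := by
    field_simp
    ring
  have h2 : 0 ≤ 1 / (2 * s) * (s * f p + (ddX f p + ddY f p)) ^ 2 := by positivity
  linarith

lemma aux_young (a b h : ℝ) (hh : 0 < h) : |a ^ 2 - b ^ 2| ≤ h * a ^ 2 + h * b ^ 2 + 1 / (2 * h) * (a - b) ^ 2 := by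
  have h1 : |a ^ 2 - b ^ 2| = |a + b| * |a - b| := by rw [← abs_mul]; congr 1; ring
  have h2 : h / 2 * |a + b| ^ 2 + 1 / (2 * h) * |a - b| ^ 2 - |a + b| * |a - b|
      = 1 / (2 * h) * (h * |a + b| - |a - b|) ^ 2 := by
    field_simp
    ring
  have h3 : 0 ≤ 1 / (2 * h) * (h * |a + b| - |a - b|) ^ 2 := by positivity
  rw [sq_abs, sq_abs] at h2
  rw [h1]
  nlinarith [mul_nonneg hh.le (sq_nonneg (a - b))]

lemma aux_dXsq {m n : ℕ} [NeZero m] [NeZero n] (g : Grid m n) (h : ℝ) (hh : 0 < h) :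
    ∑ p, |dX (fun p => g p ^ 2) p| ≤ 2 * h * ∑ p, g p ^ 2 + 1 / (2 * h) * ∑ p, dX g p ^ 2 := by
  have h1 := aux_shiftX (fun p => g p ^ 2)
  have h2 : ∑ p, |dX (fun p => g p ^ 2) p| ≤ ∑ p : ZMod m × ZMod n, (h * g (p.1 + 1, p.2) ^ 2 + h * g p ^ 2
      + 1 / (2 * h) * dX g p ^ 2) :=
    Finset.sum_le_sum fun p _ => aux_young _ _ h hh
  rw [Finset.sum_add_distrib, Finset.sum_add_distrib, ← Finset.mul_sum, ← Finset.mul_sum,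
    ← Finset.mul_sum, h1] at h2
  linarith

lemma aux_dYsq {m n : ℕ} [NeZero m] [NeZero n] (g : Grid m n) (h : ℝ) (hh : 0 < h) :
    ∑ p, |dY (fun p => g p ^ 2) p| ≤ 2 * h * ∑ p, g p ^ 2 + 1 / (2 * h) * ∑ p, dY g p ^ 2 := by
  have h1 := aux_shiftY (fun p => g p ^ 2)
  have h2 : ∑ p, |dY (fun p => g p ^ 2) p| ≤ ∑ p : ZMod m × ZMod n, (h * g (p.1, p.2 + 1) ^ 2 + h * g p ^ 2
      + 1 / (2 * h) * dY g p ^ 2) :=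
    Finset.sum_le_sum fun p _ => aux_young _ _ h hh
  rw [Finset.sum_add_distrib, Finset.sum_add_distrib, ← Finset.mul_sum, ← Finset.mul_sum,
    ← Finset.mul_sum, h1] at h2
  linarith

lemma aux_lady {m n : ℕ} [NeZero m] [NeZero n] (u : Grid m n) :
    ∑ p, u p ^ 2 ≤ ((1 / (m : ℝ)) * ∑ p, |u p| + ∑ p, |dX u p|)
      * ((1 / (n : ℝ)) * ∑ p, |u p| + ∑ p, |dY u p|) := by
  have e1 : (1 / (m : ℝ)) * ∑ p, |u p| + ∑ p, |dX u p| =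
      ∑ j, ((1 / (m : ℝ)) * ∑ k, |u (k, j)| + ∑ k, |dX u (k, j)|) := by
    rw [Fintype.sum_prod_type_right, Fintype.sum_prod_type_right, Finset.mul_sum,
      ← Finset.sum_add_distrib]
  have e2 : (1 / (n : ℝ)) * ∑ p, |u p| + ∑ p, |dY u p| =
      ∑ i, ((1 / (n : ℝ)) * ∑ k, |u (i, k)| + ∑ k, |dY u (i, k)|) := by
    rw [Fintype.sum_prod_type, Fintype.sum_prod_type, Finset.mul_sum,
      ← Finset.sum_add_distrib]
  rw [e1, e2, mul_comm, Finset.sum_mul_sum, Fintype.sum_prod_type]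
  refine Finset.sum_le_sum fun i _ => Finset.sum_le_sum fun j _ => ?_
  rw [← sq_abs, pow_two]
  have := aux_supX u i j
  have := aux_supY u i j
  gcongr

lemma aux_l4 {m n : ℕ} [NeZero m] [NeZero n] (g : Grid m n) (h Lx Ly N : ℝ) (hh : 0 < h)
    (hLx : (m : ℝ) * h = Lx) (hLy : (n : ℝ) * h = Ly)
    (h0 : ∑ p, g p ^ 2 ≤ N) (h1 : ∑ p, dX g p ^ 2 ≤ h ^ 2 * N) (h2 : ∑ p, dY g p ^ 2 ≤ h ^ 2 * N) :
    ∑ p, g p ^ 4 ≤ h ^ 2 * ((1 / Lx + 1 / Ly + 3) * N) ^ 2 := by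
  have hm : (0 : ℝ) < m := by exact_mod_cast Nat.pos_of_ne_zero (NeZero.ne m)
  have hn : (0 : ℝ) < n := by exact_mod_cast Nat.pos_of_ne_zero (NeZero.ne n)
  have hLx0 : 0 < Lx := hLx ▸ mul_pos hm hh
  have hLy0 : 0 < Ly := hLy ▸ mul_pos hn hh
  have hS : 0 ≤ ∑ p, g p ^ 2 := Finset.sum_nonneg fun _ _ => sq_nonneg _
  have hN : 0 ≤ N := hS.trans h0
  have hl := aux_lady (fun p => g p ^ 2)
  simp only [abs_pow, sq_abs, ← pow_mul] at hl
  have hx := aux_dXsq g h hh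
  have hy := aux_dYsq g h hh
  have em : 1 / (m : ℝ) = h * (1 / Lx) := by rw [← hLx]; field_simp
  have en : 1 / (n : ℝ) = h * (1 / Ly) := by rw [← hLy]; field_simp
  have e : 1 / (2 * h) * (h ^ 2 * N) = h * N / 2 := by field_simp
  have bx : 1 / (2 * h) * ∑ p, dX g p ^ 2 ≤ h * N / 2 := by rw [← e]; gcongr
  have bY : 1 / (2 * h) * ∑ p, dY g p ^ 2 ≤ h * N / 2 := by rw [← e]; gcongr
  have b0 : 2 * h * ∑ p, g p ^ 2 ≤ 2 * h * N := by gcongr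
  have bm : 1 / (m : ℝ) * ∑ p, g p ^ 2 ≤ h * (1 / Lx) * N := by rw [em]; gcongr
  have bn : 1 / (n : ℝ) * ∑ p, g p ^ 2 ≤ h * (1 / Ly) * N := by rw [en]; gcongr
  have p1 : 0 ≤ h * (1 / Lx) * N := by positivity
  have p2 : 0 ≤ h * (1 / Ly) * N := by positivity
  have p3 : 0 ≤ h * N := by positivity
  have c1 : (1 / (m : ℝ)) * ∑ p, g p ^ 2 + ∑ p, |dX (fun p => g p ^ 2) p| ≤
      h * ((1 / Lx + 1 / Ly + 3) * N) := by
    have : h * ((1 / Lx + 1 / Ly + 3) * N) = h * (1 / Lx) * N + h * (1 / Ly) * N + 3 * (h * N) := by ring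
    linarith
  have c2 : (1 / (n : ℝ)) * ∑ p, g p ^ 2 + ∑ p, |dY (fun p => g p ^ 2) p| ≤
      h * ((1 / Lx + 1 / Ly + 3) * N) := by
    have : h * ((1 / Lx + 1 / Ly + 3) * N) = h * (1 / Lx) * N + h * (1 / Ly) * N + 3 * (h * N) := by ring
    linarith
  have hfin : ∑ p, g p ^ 4 ≤ (h * ((1 / Lx + 1 / Ly + 3) * N)) * (h * ((1 / Lx + 1 / Ly + 3) * N)) := by
    refine le_trans ?_ (mul_le_mul c1 c2 (by positivity) (by positivity))
    simpa using hl
  calc _ ≤ _ := hfin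
    _ = _ := by ring

lemma aux_energy {m n : ℕ} [NeZero m] [NeZero n] (α h Lx Ly : ℝ) (hα : 0 < α) (hh : 0 < h)
    (hLx : (m : ℝ) * h = Lx) (hLy : (n : ℝ) * h = Ly) (φ : Grid m n) :
    energyF α h φ ≥ α / (4 * (2 + α)) *
      (h ^ 2 * ∑ p, φ p ^ 2 + 1 / h ^ 2 * ∑ p, (ddX φ p + ddY φ p) ^ 2) - Lx * Ly / 4 := by
  have n4 : norm4 h φ ^ 4 = h ^ 2 * ∑ p, φ p ^ 4 := by
    have : 0 ≤ h ^ 2 * ∑ p, φ p ^ 4 :=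
      mul_nonneg (by positivity) (Finset.sum_nonneg fun _ _ => by positivity)
    rw [norm4, ← Real.rpow_natCast, ← Real.rpow_mul this]
    norm_num
  have n2 : norm2 h φ ^ 2 = h ^ 2 * ∑ p, φ p ^ 2 := by
    rw [norm2, Real.sq_sqrt (by positivity)]
  have ng : gradNorm2 h φ ^ 2 = ∑ p, dX φ p ^ 2 + ∑ p, dY φ p ^ 2 := by
    rw [gradNorm2, Real.sq_sqrt (by positivity), Finset.mul_sum, ← Finset.sum_add_distrib]
    refine Finset.sum_congr rfl fun p _ => ?_
    simp only [Dx, Dy, dX, dY]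
    field_simp
  have nl : norm2 h (lapH h φ) ^ 2 = 1 / h ^ 2 * ∑ p, (ddX φ p + ddY φ p) ^ 2 := by
    rw [norm2, Real.sq_sqrt (by positivity), Finset.mul_sum, Finset.mul_sum]
    refine Finset.sum_congr rfl fun p _ => ?_
    simp only [lapH, ddX, ddY]
    field_simp
    ring
  have h4 : h ^ 2 * ∑ p, φ p ^ 4 ≥ 2 * (h ^ 2 * ∑ p, φ p ^ 2) - Lx * Ly := by
    have e : Lx * Ly = h ^ 2 * ∑ _p : ZMod m × ZMod n, (1 : ℝ) := by
      simp only [Finset.sum_const, Finset.card_univ, Fintype.card_prod, ZMod.card, nsmul_eq_mul]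
      rw [← hLx, ← hLy]; push_cast; ring
    have e2 : ∑ p, φ p ^ 4 ≥ 2 * ∑ p, φ p ^ 2 - ∑ _p : ZMod m × ZMod n, (1 : ℝ) := by
      rw [Finset.mul_sum, ← Finset.sum_sub_distrib]
      refine Finset.sum_le_sum fun p _ => ?_
      nlinarith [sq_nonneg (φ p ^ 2 - 1)]
    rw [e]
    nlinarith [sq_nonneg h]
  have hg := aux_grad φ (h ^ 2 * (1 + α / 2)) (by positivity)
  rw [energyF, n4, n2, ng, nl]
  set S := ∑ p, φ p ^ 2
  set T := ∑ p, (ddX φ p + ddY φ p) ^ 2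
  have hS : 0 ≤ S := Finset.sum_nonneg fun _ _ => sq_nonneg _
  have hT : 0 ≤ T := Finset.sum_nonneg fun _ _ => sq_nonneg _
  have hA : 0 ≤ h ^ 2 * S := by positivity
  have hB : 0 ≤ 1 / h ^ 2 * T := by positivity
  have eA : h ^ 2 * (1 + α / 2) / 2 * S = (1 / 2 + α / 4) * (h ^ 2 * S) := by ring
  have eB : 1 / (2 * (h ^ 2 * (1 + α / 2))) * T = (1 / 2 - α / (2 * (2 + α))) * (1 / h ^ 2 * T) := by
    field_simp
    ring
  rw [eA, eB] at hg
  have k1 : α / (4 * (2 + α)) * (h ^ 2 * S) ≤ α / 4 * (h ^ 2 * S) := by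
    refine mul_le_mul_of_nonneg_right ?_ hA
    rw [div_le_div_iff₀ (by positivity) (by positivity)]
    nlinarith
  have k2 : α / (4 * (2 + α)) * (1 / h ^ 2 * T) ≤ α / (2 * (2 + α)) * (1 / h ^ 2 * T) := by
    refine mul_le_mul_of_nonneg_right ?_ hB
    rw [div_le_div_iff₀ (by positivity) (by positivity)]
    nlinarith
  linarith

lemma aux_bounds {m n : ℕ} [NeZero m] [NeZero n] (h Lx Ly N : ℝ) (hh : 0 < h)
    (hLx : (m : ℝ) * h = Lx) (hLy : (n : ℝ) * h = Ly) (φ : Grid m n)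
    (hN : N = h ^ 2 * ∑ p, φ p ^ 2 + 1 / h ^ 2 * ∑ p, (ddX φ p + ddY φ p) ^ 2) :
    normInf φ ^ 2 ≤ 4 * (1 / (Lx * Ly) + Ly / Lx + Lx / Ly + Lx * Ly) * N ∧
    gradNorm4 h φ ^ 2 ≤ 2 * (1 / Lx + 1 / Ly + 3) * N := by
  have hm : (0 : ℝ) < m := by exact_mod_cast Nat.pos_of_ne_zero (NeZero.ne m)
  have hn : (0 : ℝ) < n := by exact_mod_cast Nat.pos_of_ne_zero (NeZero.ne n)
  have hLx0 : 0 < Lx := hLx ▸ mul_pos hm hh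
  have hLy0 : 0 < Ly := hLy ▸ mul_pos hn hh
  have hS : 0 ≤ h ^ 2 * ∑ p, φ p ^ 2 := by positivity
  have hT : 0 ≤ 1 / h ^ 2 * ∑ p, (ddX φ p + ddY φ p) ^ 2 := by positivity
  have hN0 : 0 ≤ N := by linarith
  have hSN : h ^ 2 * ∑ p, φ p ^ 2 ≤ N := by linarith
  have hTN : ∑ p, (ddX φ p + ddY φ p) ^ 2 ≤ h ^ 2 * N := by
    have : 1 / h ^ 2 * ∑ p, (ddX φ p + ddY φ p) ^ 2 ≤ N := by linarith
    rw [one_div, inv_mul_le_iff₀ (by positivity)] at this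
    exact this
  have hg := aux_grad φ (h ^ 2) (by positivity)
  have eB : 1 / (2 * h ^ 2) * ∑ p, (ddX φ p + ddY φ p) ^ 2 =
      (1 / h ^ 2 * ∑ p, (ddX φ p + ddY φ p) ^ 2) / 2 := by field_simp
  rw [eB] at hg
  have hx0 : 0 ≤ ∑ p, dX φ p ^ 2 := by positivity
  have hy0 : 0 ≤ ∑ p, dY φ p ^ 2 := by positivity
  have hxN : ∑ p, dX φ p ^ 2 ≤ N := by linarith
  have hyN : ∑ p, dY φ p ^ 2 ≤ N := by linarith
  have hl := aux_lap φ
  have hxx : 0 ≤ ∑ p, dX (dX φ) p ^ 2 := by positivity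
  have hxy : 0 ≤ ∑ p, dY (dX φ) p ^ 2 := by positivity
  have hyy : 0 ≤ ∑ p, dY (dY φ) p ^ 2 := by positivity
  have hxxN : ∑ p, dX (dX φ) p ^ 2 ≤ h ^ 2 * N := by linarith
  have hxyN : ∑ p, dY (dX φ) p ^ 2 ≤ h ^ 2 * N := by linarith
  have hyyN : ∑ p, dY (dY φ) p ^ 2 ≤ h ^ 2 * N := by linarith
  constructor
  · have key : ∀ p, φ p ^ 2 ≤ 4 * (1 / (Lx * Ly) + Ly / Lx + Lx / Ly + Lx * Ly) * N := by
      intro p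
      have h0 := aux_supsq φ p
      have e1 : 1 / ((m : ℝ) * n) * ∑ p, φ p ^ 2 = 1 / (Lx * Ly) * (h ^ 2 * ∑ p, φ p ^ 2) := by
        rw [← hLx, ← hLy]; field_simp
      have e2 : (n : ℝ) / m = Ly / Lx := by rw [← hLx, ← hLy]; field_simp
      have e3 : (m : ℝ) / n = Lx / Ly := by rw [← hLx, ← hLy]; field_simp
      rw [e1, e2, e3] at h0
      have b1 : 1 / (Lx * Ly) * (h ^ 2 * ∑ p, φ p ^ 2) ≤ 1 / (Lx * Ly) * N := by gcongr
      have b2 : Ly / Lx * ∑ p, dY φ p ^ 2 ≤ Ly / Lx * N := by gcongr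
      have b3 : Lx / Ly * ∑ p, dX φ p ^ 2 ≤ Lx / Ly * N := by gcongr
      have b4 : (m : ℝ) * n * ∑ p, dY (dX φ) p ^ 2 ≤ Lx * Ly * N := by
        calc _ ≤ (m : ℝ) * n * (h ^ 2 * N) := by gcongr
          _ = _ := by rw [← hLx, ← hLy]; ring
      linarith
    have hs : normInf φ ≤ Real.sqrt (4 * (1 / (Lx * Ly) + Ly / Lx + Lx / Ly + Lx * Ly) * N) :=
      ciSup_le fun p => Real.abs_le_sqrt (key p)
    have hs0 : 0 ≤ normInf φ := Real.iSup_nonneg fun p => abs_nonneg _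
    calc _ ≤ _ := pow_le_pow_left₀ hs0 hs 2
      _ = _ := Real.sq_sqrt (by positivity)
  · have gx := aux_l4 (dX φ) h Lx Ly N hh hLx hLy hxN hxxN hxyN
    have gy := aux_l4 (dY φ) h Lx Ly N hh hLx hLy hyN (by rw [aux_comm]; exact hxyN) hyyN
    set M := (1 / Lx + 1 / Ly + 3) * N with hM
    have hM0 : 0 ≤ M := by positivity
    have e : h ^ 2 * ∑ p, (Dx h φ p ^ 4 + Dy h φ p ^ 4) =
        1 / h ^ 2 * (∑ p, dX φ p ^ 4 + ∑ p, dY φ p ^ 4) := by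
      rw [← Finset.sum_add_distrib, Finset.mul_sum, Finset.mul_sum]
      refine Finset.sum_congr rfl fun p _ => ?_
      simp only [Dx, Dy, dX, dY]
      field_simp
    have hle : h ^ 2 * ∑ p, (Dx h φ p ^ 4 + Dy h φ p ^ 4) ≤ (2 * M) ^ 2 := by
      rw [e, one_div, inv_mul_le_iff₀ (by positivity)]
      nlinarith [mul_nonneg (sq_nonneg h) (sq_nonneg M)]
    have hnn : 0 ≤ h ^ 2 * ∑ p, (Dx h φ p ^ 4 + Dy h φ p ^ 4) := by
      refine mul_nonneg (by positivity) (Finset.sum_nonneg fun _ _ => by positivity)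
    have e4 : gradNorm4 h φ ^ 2 = Real.sqrt (h ^ 2 * ∑ p, (Dx h φ p ^ 4 + Dy h φ p ^ 4)) := by
      rw [gradNorm4, ← Real.rpow_natCast, ← Real.rpow_mul hnn, Real.sqrt_eq_rpow]
      norm_num
    rw [e4]
    calc _ ≤ Real.sqrt ((2 * M) ^ 2) := Real.sqrt_le_sqrt hle
      _ = 2 * M := Real.sqrt_sq (by positivity)
      _ = _ := by rw [hM]; ring

/-- There are constants `C₆, C₇ > 0` depending only on `α`, `Lx`, `Ly` (not on `h`, `m`,
`n`) such that `F(φ) ≥ C₆‖φ‖_∞² − Lx·Ly/4` and `F(φ) ≥ C₇‖∇ₕφ‖₄² − Lx·Ly/4`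
for every periodic grid function `φ`. -/
theorem discrete_energy_Linfty_W14_coercive (α Lx Ly : ℝ)
    (hα : 0 < α) (hLx : 0 < Lx) (hLy : 0 < Ly) :
    ∃ C₆ > (0 : ℝ), ∃ C₇ > (0 : ℝ),
      ∀ (m n : ℕ) [NeZero m] [NeZero n] (h : ℝ), 0 < h →
        (m : ℝ) * h = Lx → (n : ℝ) * h = Ly →
        ∀ φ : Grid m n,
          energyF α h φ ≥ C₆ * normInf φ ^ 2 - Lx * Ly / 4 ∧
          energyF α h φ ≥ C₇ * gradNorm4 h φ ^ 2 - Lx * Ly / 4 := by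
  have hc : 0 < α / (4 * (2 + α)) := by positivity
  have hK : 0 < 4 * (1 / (Lx * Ly) + Ly / Lx + Lx / Ly + Lx * Ly) := by positivity
  have hM : 0 < 2 * (1 / Lx + 1 / Ly + 3) := by positivity
  refine ⟨α / (4 * (2 + α)) / (4 * (1 / (Lx * Ly) + Ly / Lx + Lx / Ly + Lx * Ly)), div_pos hc hK,
    α / (4 * (2 + α)) / (2 * (1 / Lx + 1 / Ly + 3)), div_pos hc hM, ?_⟩
  intro m n _ _ h hh hx hy φ
  have hE := aux_energy α h Lx Ly hα hh hx hy φ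
  obtain ⟨h1, h2⟩ := aux_bounds h Lx Ly _ hh hx hy φ rfl
  have aux : ∀ c K X N : ℝ, 0 < c → 0 < K → X ≤ K * N → c / K * X ≤ c * N := by
    intro c K X N hc hK hX
    calc c / K * X ≤ c / K * (K * N) := mul_le_mul_of_nonneg_left hX (div_pos hc hK).le
      _ = c * N := by field_simp
  have a1 := aux _ _ _ _ hc hK h1
  have a2 := aux _ _ _ _ hc hM h2
  constructor <;> linarith
end
end

section
/- Unconditional unique solvability of the second-order convex splitting scheme: for every β > 0, α > 0, every time step s > 0, and all periodic grid functions φ^{k−1}, φ^k, ψ^k, there exists a unique pair of periodic grid functions (φ^{k+1}, ψ^{k+1}) satisfying the second-order convex splitting scheme. -/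
open Finset

noncomputable section

/-- The discrete chemical potential `μ` of the second-order convex splitting scheme,
built from `φ^{k−1} = φm`, `φ^k = φk` and the unknown `φ^{k+1} = φn`. -/
def chemPot {m n : ℕ} (α h : ℝ) (φm φk φn : Grid m n) : Grid m n :=
  fun p => (φn p ^ 2 + φk p ^ 2) / 2 * ((φn p + φk p) / 2)
    + α * ((φn p + φk p) / 2)
    + lapH h (fun q => 3 * φk q - φm q) p
    + lapH h (lapH h (fun q => (φn q + φk q) / 2)) p

/-- The second-order convex splitting scheme for the MPFC equation:
`β(ψ^{k+1} − ψ^k) = s Δₕμ − s ψ^{k+1/2}` and `φ^{k+1} − φ^k = s ψ^{k+1/2}`. -/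
def Scheme {m n : ℕ} (β α s h : ℝ) (φm φk ψk φn ψn : Grid m n) : Prop :=
  (∀ p, β * (ψn p - ψk p)
      = s * lapH h (chemPot α h φm φk φn) p - s * ((ψn p + ψk p) / 2)) ∧
  (∀ p, φn p - φk p = s * ((ψn p + ψk p) / 2))

/-- Abstract existence by minimization of a convex energy. -/
lemma abstract_exists {ι : Type*} [Fintype ι]
    (L M : (ι → ℝ) →ₗ[ℝ] (ι → ℝ))
    (hLs : ∀ x y, ∑ p, x p * L y p = ∑ p, L x p * y p)
    (hLp : ∀ x, 0 ≤ ∑ p, x p * L x p)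
    (hMs : ∀ x y, ∑ p, x p * M y p = ∑ p, M x p * y p)
    (hMp : ∀ x, 0 ≤ ∑ p, x p * M x p)
    (F N : ι → ℝ → ℝ) (hF : ∀ p x, HasDerivAt (F p) (N p x) x)
    (a : ℝ) (ha : 0 < a) (C : ι → ℝ) (hlow : ∀ p x, a * x ^ 2 - C p ≤ F p x)
    (g : ι → ℝ) :
    ∃ u : ι → ℝ, ∀ p, u p + L (fun q => N q (u q) + M u q) p = g p := by
  obtain ⟨S, hS⟩ := LinearMap.exists_rightInverse_of_surjective L.rangeRestrict
    (LinearMap.range_rangeRestrict L)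
  have hS' : ∀ v : LinearMap.range L, L (S v) = (v : ι → ℝ) := by
    intro v
    have := congrArg (fun f => ((f v : LinearMap.range L) : ι → ℝ)) hS
    simpa using this
  let J : LinearMap.range L → ℝ := fun v =>
    (∑ p, S v p * (v : ι → ℝ) p) / 2 + ∑ p, F p (g p - (v : ι → ℝ) p)
      + (∑ p, (g - (v : ι → ℝ)) p * M (g - (v : ι → ℝ)) p) / 2
  have hFc : ∀ p, Continuous (F p) := fun p =>
    continuous_iff_continuousAt.2 fun x => (hF p x).continuousAt
  have hSc : Continuous S := LinearMap.continuous_of_finiteDimensional S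
  have hMc : Continuous M := LinearMap.continuous_of_finiteDimensional M
  have hJc : Continuous J := by
    have h1 : ∀ p, Continuous fun v : LinearMap.range L => (v : ι → ℝ) p := fun p =>
      (continuous_apply p).comp continuous_subtype_val
    have h2 : ∀ p, Continuous fun v : LinearMap.range L => S v p := fun p =>
      (continuous_apply p).comp hSc
    have h3 : ∀ p, Continuous fun v : LinearMap.range L => M (g - (v : ι → ℝ)) p := fun p =>
      (continuous_apply p).comp (hMc.comp (continuous_const.sub continuous_subtype_val))
    refine Continuous.add (Continuous.add ?_ ?_) ?_
    · exact (continuous_finsetSum _ fun p _ => (h2 p).mul (h1 p)).div_const _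
    · exact continuous_finsetSum _ fun p _ => (hFc p).comp (continuous_const.sub (h1 p))
    · exact (continuous_finsetSum _ fun p _ =>
        (continuous_const.sub (h1 p)).mul (h3 p)).div_const _
  have hnorm : ∀ x : ι → ℝ, ‖x‖ ≤ ∑ p, (x p ^ 2 + 1) := by
    intro x
    rw [pi_norm_le_iff_of_nonneg (Finset.sum_nonneg fun p _ => by positivity)]
    intro p
    have h1 : x p ^ 2 + 1 ≤ ∑ p, (x p ^ 2 + 1) :=
      Finset.single_le_sum (f := fun p => x p ^ 2 + 1) (fun q _ => by positivity)
        (Finset.mem_univ p)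
    have h2 : ‖x p‖ ≤ x p ^ 2 + 1 := by
      rw [Real.norm_eq_abs, ← sq_abs]
      nlinarith [sq_nonneg (|x p| - 1), abs_nonneg (x p)]
    exact h2.trans h1
  have hJlow : ∀ v : LinearMap.range L,
      a * ‖v‖ + (- a * ‖g‖ - ∑ p, (a + C p)) ≤ J v := by
    intro v
    have h1 : 0 ≤ ∑ p, S v p * (v : ι → ℝ) p := by
      have := hLp (S v)
      rwa [hS'] at this
    have h2 := hMp (g - (v : ι → ℝ))
    have h3 : ∑ p, (a * (g p - (v : ι → ℝ) p) ^ 2 - C p) ≤ ∑ p, F p (g p - (v : ι → ℝ) p) :=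
      Finset.sum_le_sum fun p _ => hlow p _
    have h4 := hnorm (g - (v : ι → ℝ))
    have h5 : ∑ p, (a * (g p - (v : ι → ℝ) p) ^ 2 - C p)
        = a * ∑ p, ((g - (v : ι → ℝ)) p ^ 2 + 1) - ∑ p, (a + C p) := by
      rw [Finset.mul_sum, ← Finset.sum_sub_distrib]
      refine Finset.sum_congr rfl fun p _ => ?_
      simp only [Pi.sub_apply]; ring
    have h6 : ‖v‖ ≤ ‖g‖ + ‖g - (v : ι → ℝ)‖ := by
      have := norm_sub_le g (g - (v : ι → ℝ))
      simpa using this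
    have h7 : a * ‖v‖ ≤ a * (‖g‖ + ∑ p, ((g - (v : ι → ℝ)) p ^ 2 + 1)) :=
      mul_le_mul_of_nonneg_left (h6.trans (by linarith)) ha.le
    simp only [J]
    linarith
  have hJt : Filter.Tendsto J (Filter.cocompact _) Filter.atTop := by
    refine Filter.tendsto_atTop_mono hJlow ?_
    refine Filter.tendsto_atTop_add_const_right _ _ ?_
    exact (tendsto_norm_cocompact_atTop (E := LinearMap.range L)).const_mul_atTop ha
  obtain ⟨v, hv⟩ := hJc.exists_forall_le hJt
  set u : ι → ℝ := g - (v : ι → ℝ) with hu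
  set w : ι → ℝ := S v with hw
  set μ : ι → ℝ := fun q => N q (u q) + M u q with hμ
  have hLw : L w = v := hS' v
  have key : ∀ η : ι → ℝ, ∑ p, (w p - μ p) * L η p = 0 := by
    intro η
    let d : LinearMap.range L := ⟨L η, LinearMap.mem_range_self L η⟩
    have hd : (d : ι → ℝ) = L η := rfl
    have hline : HasDerivAt (fun t : ℝ => J (v + t • d))
        ((∑ p, (S d p * (v : ι → ℝ) p + w p * L η p)) / 2 + ∑ p, N p (u p) * (- L η p)
          + (∑ p, ((- L η p) * M u p + u p * (- M (L η) p))) / 2) 0 := by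
      have e1 : ∀ p, HasDerivAt (fun t : ℝ => (v : ι → ℝ) p + t * L η p) (L η p) 0 := by
        intro p
        simpa using ((hasDerivAt_id (0:ℝ)).mul_const (L η p)).const_add ((v : ι → ℝ) p)
      have e2 : ∀ p, HasDerivAt (fun t : ℝ => w p + t * S d p) (S d p) 0 := by
        intro p
        simpa using ((hasDerivAt_id (0:ℝ)).mul_const (S d p)).const_add (w p)
      have e3 : ∀ p, HasDerivAt (fun t : ℝ => u p - t * L η p) (- L η p) 0 := by
        intro p
        simpa using ((hasDerivAt_id (0:ℝ)).mul_const (L η p)).const_sub (u p)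
      have e4 : ∀ p, HasDerivAt (fun t : ℝ => M u p - t * M (L η) p) (- M (L η) p) 0 := by
        intro p
        simpa using ((hasDerivAt_id (0:ℝ)).mul_const (M (L η) p)).const_sub (M u p)
      have e5 : ∀ p, HasDerivAt (fun t : ℝ => F p (u p - t * L η p))
          (N p (u p) * (- L η p)) 0 := by
        intro p
        have : HasDerivAt (F p) (N p (u p)) (u p - 0 * L η p) := by
          simpa using hF p (u p)
        exact this.comp (0:ℝ) (e3 p)
      have f1 := (HasDerivAt.fun_sum (u := Finset.univ)
        fun p _ => (e2 p).fun_mul (e1 p)).div_const 2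
      have f2 := HasDerivAt.fun_sum (u := Finset.univ) fun p _ => e5 p
      have f3 := (HasDerivAt.fun_sum (u := Finset.univ)
        fun p _ => (e3 p).fun_mul (e4 p)).div_const 2
      have f := (f1.fun_add f2).fun_add f3
      refine (f.congr_deriv ?_).congr_of_eventuallyEq (Filter.Eventually.of_forall fun t => ?_)
      · simp
      · change J (v + t • d) = _
        have hg : g - ((v + t • d : LinearMap.range L) : ι → ℝ) = u - t • L η := by
          simp [hu, hd, sub_sub]
        have hg2 : ∀ p, g p - ((v + t • d : LinearMap.range L) : ι → ℝ) p
            = u p - t * L η p := by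
          intro p
          simpa using congrFun hg p
        simp only [J, hg, hg2]
        simp [hw, hd]
    have hz := IsLocalMin.hasDerivAt_eq_zero (f := fun t : ℝ => J (v + t • d)) (a := 0)
      (Filter.Eventually.of_forall fun t => by simpa using hv (v + t • d)) hline
    have s1 : ∑ p, S d p * (v : ι → ℝ) p = ∑ p, w p * L η p := by
      rw [← hLw, hLs, hS' d, hd]
      exact Finset.sum_congr rfl fun p _ => mul_comm _ _
    have s2 : ∑ p, u p * (- M (L η) p) = ∑ p, (- L η p) * M u p := by
      have := hMs u (L η)
      simp only [mul_neg, neg_mul, Finset.sum_neg_distrib, this]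
      congr 1
      exact Finset.sum_congr rfl fun p _ => mul_comm _ _
    rw [Finset.sum_add_distrib, Finset.sum_add_distrib, s1, s2] at hz
    have : ∑ p, (w p - μ p) * L η p
        = ∑ p, w p * L η p + ∑ p, N p (u p) * (- L η p) + ∑ p, (- L η p) * M u p := by
      rw [← Finset.sum_add_distrib, ← Finset.sum_add_distrib]
      refine Finset.sum_congr rfl fun p _ => ?_
      simp only [hμ]; ring
    rw [this]; linarith
  have hzero : L (w - μ) = 0 := by
    have h1 := key (L (w - μ))
    have h2 := hLs (w - μ) (L (w - μ))
    have h3 : ∑ p, L (w - μ) p * L (w - μ) p = 0 := by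
      rw [← h2]; exact h1
    funext p
    have := (Finset.sum_eq_zero_iff_of_nonneg fun q _ => mul_self_nonneg _).1 h3 p
      (Finset.mem_univ p)
    exact mul_self_eq_zero.1 this
  refine ⟨u, fun p => ?_⟩
  have h1 : L μ = v := by
    rw [map_sub, hLw] at hzero
    exact (sub_eq_zero.1 hzero).symm
  change u p + L μ p = g p
  rw [h1, hu]; simp

/-- Abstract uniqueness by monotonicity. -/
lemma abstract_unique {ι : Type*} [Fintype ι]
    (L M : (ι → ℝ) →ₗ[ℝ] (ι → ℝ))
    (hLp : ∀ x, 0 ≤ ∑ p, x p * L x p)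
    (hMp : ∀ x, 0 ≤ ∑ p, x p * M x p)
    (N : ι → ℝ → ℝ) (a : ℝ) (ha : 0 < a)
    (hN : ∀ p x y, a * (x - y) ^ 2 ≤ (N p x - N p y) * (x - y))
    (g u₁ u₂ : ι → ℝ)
    (h₁ : ∀ p, u₁ p + L (fun q => N q (u₁ q) + M u₁ q) p = g p)
    (h₂ : ∀ p, u₂ p + L (fun q => N q (u₂ q) + M u₂ q) p = g p) : u₁ = u₂ := by
  set e : ι → ℝ := (fun q => N q (u₁ q) + M u₁ q) - (fun q => N q (u₂ q) + M u₂ q) with he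
  have hd : ∀ p, L e p = - (u₁ p - u₂ p) := by
    intro p
    rw [he, map_sub, Pi.sub_apply]
    linarith [h₁ p, h₂ p]
  have h3 := hLp e
  have h4 := hMp (u₁ - u₂)
  have h5 : ∑ p, a * (u₁ p - u₂ p) ^ 2 + ∑ p, (u₁ - u₂) p * M (u₁ - u₂) p
      + ∑ p, e p * L e p ≤ 0 := by
    rw [← Finset.sum_add_distrib, ← Finset.sum_add_distrib]
    refine Finset.sum_nonpos fun p _ => ?_
    rw [hd, map_sub]
    simp only [he, Pi.sub_apply]
    nlinarith [hN p (u₁ p) (u₂ p)]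
  have h6 : ∑ p, a * (u₁ p - u₂ p) ^ 2 = 0 :=
    le_antisymm (by linarith) (Finset.sum_nonneg fun p _ => by positivity)
  funext p
  have := (Finset.sum_eq_zero_iff_of_nonneg fun q _ => by positivity).1 h6 p (Finset.mem_univ p)
  have h7 : (u₁ p - u₂ p) ^ 2 = 0 := by
    rcases mul_eq_zero.1 this with h | h
    · exact absurd h ha.ne'
    · exact h
  exact sub_eq_zero.1 (pow_eq_zero_iff (two_ne_zero) |>.1 h7)

/-- The discrete Laplacian as a linear map. -/
def lapLin (m n : ℕ) (h : ℝ) : Grid m n →ₗ[ℝ] Grid m n where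
  toFun := lapH h
  map_add' x y := by
    funext p; simp only [lapH, Pi.add_apply]; ring
  map_smul' c x := by
    funext p; simp only [lapH, Pi.smul_apply, smul_eq_mul, RingHom.id_apply]; ring

lemma sum_shift {G : Type*} [Fintype G] [AddGroup G] (e : G) (f : G → ℝ) :
    ∑ p, f (p + e) = ∑ p, f p :=
  Equiv.sum_comp (Equiv.addRight e) f

lemma shift_sym {G : Type*} [Fintype G] [AddGroup G] (e : G) (x y : G → ℝ) :
    ∑ p, x p * y (p - e) = ∑ p, x (p + e) * y p := by
  rw [← sum_shift e (fun p => x p * y (p - e))]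
  simp

lemma lapH_eq {m n : ℕ} (h : ℝ) (y : Grid m n) (p : ZMod m × ZMod n) :
    lapH h y p = (y (p + (1, 0)) + y (p - (1, 0)) + y (p + (0, 1)) + y (p - (0, 1))
      - 4 * y p) / h ^ 2 := by
  obtain ⟨i, j⟩ := p
  simp [lapH]

lemma lap_form {m n : ℕ} [NeZero m] [NeZero n] (h : ℝ) (x y : Grid m n) :
    ∑ p, x p * lapH h y p = -(∑ p, ((x (p + (1, 0)) - x p) * (y (p + (1, 0)) - y p)
      + (x (p + (0, 1)) - x p) * (y (p + (0, 1)) - y p))) / h ^ 2 := by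
  have a1 := shift_sym ((1, 0) : ZMod m × ZMod n) x y
  have a2 := shift_sym ((0, 1) : ZMod m × ZMod n) x y
  have b1 := sum_shift ((1, 0) : ZMod m × ZMod n) (fun p => x p * y p)
  have b2 := sum_shift ((0, 1) : ZMod m × ZMod n) (fun p => x p * y p)
  simp only [lapH_eq, mul_div_assoc', ← Finset.sum_div]
  congr 1
  simp only [mul_add, mul_sub, sub_mul, Finset.sum_add_distrib, Finset.sum_sub_distrib] at *
  have c : ∑ p, x p * (4 * y p) = 4 * ∑ p, x p * y p := by
    rw [Finset.mul_sum]; exact Finset.sum_congr rfl fun p _ => by ring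
  rw [c, a1, a2, b1, b2]
  ring

lemma lap_sym {m n : ℕ} [NeZero m] [NeZero n] (h : ℝ) (x y : Grid m n) :
    ∑ p, x p * lapH h y p = ∑ p, lapH h x p * y p := by
  have : ∑ p, lapH h x p * y p = ∑ p, y p * lapH h x p :=
    Finset.sum_congr rfl fun p _ => mul_comm _ _
  rw [this, lap_form, lap_form]
  congr 2
  exact Finset.sum_congr rfl fun p _ => by ring

lemma lap_neg {m n : ℕ} [NeZero m] [NeZero n] (h : ℝ) (x : Grid m n) :
    ∑ p, x p * lapH h x p ≤ 0 := by
  rw [lap_form, neg_div]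
  refine neg_nonpos.2 (div_nonneg (Finset.sum_nonneg fun p _ => ?_) (sq_nonneg h))
  exact add_nonneg (mul_self_nonneg _) (mul_self_nonneg _)

/-- Reduced equation for `φ^{k+1}` is uniquely solvable. -/
lemma reduced {m n : ℕ} [NeZero m] [NeZero n] (α κ h : ℝ) (hα : 0 < α) (hκ : 0 < κ)
    (φm φk g : Grid m n) :
    ∃! u : Grid m n, ∀ p, u p - κ * lapH h (chemPot α h φm φk u) p = g p := by
  let L : Grid m n →ₗ[ℝ] Grid m n := (-κ) • lapLin m n h
  let M : Grid m n →ₗ[ℝ] Grid m n := (1/2 : ℝ) • (lapLin m n h ∘ₗ lapLin m n h)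
  have hL : ∀ x p, L x p = -κ * lapH h x p := fun x p => rfl
  have hM : ∀ x p, M x p = 1/2 * lapH h (lapH h x) p := fun x p => rfl
  have hLs : ∀ x y, ∑ p, x p * L y p = ∑ p, L x p * y p := by
    intro x y
    simp only [hL, mul_left_comm _ (-κ), mul_assoc, ← Finset.mul_sum, lap_sym]
  have hLp : ∀ x, 0 ≤ ∑ p, x p * L x p := by
    intro x
    simp only [hL, mul_left_comm _ (-κ), ← Finset.mul_sum]
    nlinarith [lap_neg h x]
  have hMs : ∀ x y, ∑ p, x p * M y p = ∑ p, M x p * y p := by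
    intro x y
    simp only [hM, mul_left_comm _ (1/2 : ℝ), mul_assoc, ← Finset.mul_sum]
    rw [lap_sym, lap_sym]
  have hMp : ∀ x, 0 ≤ ∑ p, x p * M x p := by
    intro x
    simp only [hM, mul_left_comm _ (1/2 : ℝ), ← Finset.mul_sum]
    rw [lap_sym]
    exact mul_nonneg (by norm_num) (Finset.sum_nonneg fun p _ => mul_self_nonneg _)
  let f : Grid m n := fun p => lapH h (fun q => 3 * φk q - φm q) p + M φk p
  let N : ZMod m × ZMod n → ℝ → ℝ := fun p x =>
    (x ^ 2 + φk p ^ 2) / 2 * ((x + φk p) / 2) + α * ((x + φk p) / 2) + f p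
  let F : ZMod m × ZMod n → ℝ → ℝ := fun p x =>
    x ^ 4 / 16 + φk p * x ^ 3 / 12 + φk p ^ 2 * x ^ 2 / 8 + α * x ^ 2 / 4
      + (φk p ^ 3 / 4 + α * φk p / 2 + f p) * x
  have hF : ∀ p x, HasDerivAt (F p) (N p x) x := by
    intro p x
    have h4 := (hasDerivAt_pow 4 x).div_const 16
    have h3 := ((hasDerivAt_pow 3 x).const_mul (φk p)).div_const 12
    have h2 := ((hasDerivAt_pow 2 x).const_mul (φk p ^ 2)).div_const 8
    have h2' := ((hasDerivAt_pow 2 x).const_mul α).div_const 4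
    have h1 := (hasDerivAt_id x).const_mul (φk p ^ 3 / 4 + α * φk p / 2 + f p)
    have hh := (((h4.fun_add h3).fun_add h2).fun_add h2').fun_add h1
    refine hh.congr_deriv ?_
    simp only [N]
    push_cast
    ring
  have hlow : ∀ p x, α / 8 * x ^ 2
      - 2 / α * (φk p ^ 3 / 4 + α * φk p / 2 + f p) ^ 2 ≤ F p x := by
    intro p x
    simp only [F]
    generalize φk p ^ 3 / 4 + α * φk p / 2 + f p = r
    have q1 : 0 ≤ x ^ 4 / 16 + φk p * x ^ 3 / 12 + φk p ^ 2 * x ^ 2 / 8 := by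
      have : x ^ 4 / 16 + φk p * x ^ 3 / 12 + φk p ^ 2 * x ^ 2 / 8
        = x ^ 2 * ((x + 2 / 3 * φk p) ^ 2 + 14 / 9 * φk p ^ 2) / 16 := by ring
      rw [this]; positivity
    have q2 : 0 ≤ α * x ^ 2 / 8 + r * x + 2 / α * r ^ 2 := by
      have : α * x ^ 2 / 8 + r * x + 2 / α * r ^ 2 = α / 8 * (x + 4 * r / α) ^ 2 := by
        field_simp; ring
      rw [this]; positivity
    linarith
  have hN : ∀ p x y, α / 2 * (x - y) ^ 2 ≤ (N p x - N p y) * (x - y) := by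
    intro p x y
    have : (N p x - N p y) * (x - y) = α / 2 * (x - y) ^ 2
        + (x - y) ^ 2 * ((x + y + φk p) ^ 2 + x ^ 2 + y ^ 2 + φk p ^ 2) / 8 := by
      simp only [N]; ring
    rw [this]
    have : 0 ≤ (x - y) ^ 2 * ((x + y + φk p) ^ 2 + x ^ 2 + y ^ 2 + φk p ^ 2) / 8 := by
      positivity
    linarith
  have hchem : ∀ u : Grid m n, chemPot α h φm φk u = fun q => N q (u q) + M u q := by
    intro u
    funext q
    have hs : lapH h (lapH h (fun q => (u q + φk q) / 2)) q = M u q + M φk q := by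
      have : (fun q => (u q + φk q) / 2) = (1/2 : ℝ) • (u + φk) := by
        funext q; simp; ring
      rw [this]
      change (lapLin m n h) ((lapLin m n h) ((1/2 : ℝ) • (u + φk))) q = _
      simp only [map_smul, map_add, M]
      simp
      ring
    simp only [chemPot, hs, N, f]
    ring
  have hiff : ∀ u : Grid m n, (∀ p, u p - κ * lapH h (chemPot α h φm φk u) p = g p) ↔
      ∀ p, u p + L (fun q => N q (u q) + M u q) p = g p := by
    intro u
    refine forall_congr' fun p => ?_
    rw [hL, hchem, neg_mul, sub_eq_add_neg]
  obtain ⟨u, hu⟩ := abstract_exists L M hLs hLp hMs hMp F N hF (α / 8) (by positivity) _ hlow g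
  refine ⟨u, (hiff u).2 hu, fun u' hu' => ?_⟩
  exact abstract_unique L M hLp hMp N (α / 2) (by positivity) hN g u' u ((hiff u').1 hu') hu

/-- Unconditional unique solvability of the second-order convex splitting scheme. -/
theorem scheme_unique_solvability (m n : ℕ) [NeZero m] [NeZero n]
    (β α s h : ℝ) (hβ : 0 < β) (hα : 0 < α) (hs : 0 < s) (hh : 0 < h)
    (φm φk ψk : Grid m n) :
    ∃! z : Grid m n × Grid m n, Scheme β α s h φm φk ψk z.1 z.2 := by
  have hc : 0 < 2 * β / s + 1 := by positivity
  obtain ⟨u, hu, huniq⟩ := reduced (m := m) (n := n) α (s / (2 * β / s + 1)) h hα (by positivity)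
    φm φk (fun p => φk p + 2 * β * ψk p / (2 * β / s + 1))
  have e : ∀ A B D X : ℝ,
      (β * ((2 * (A - B) / s - D) - D) = s * X - s * (((2 * (A - B) / s - D) + D) / 2)) ↔
      A - s / (2 * β / s + 1) * X = B + 2 * β * D / (2 * β / s + 1) := by
    intro A B D X
    generalize hcc : 2 * β / s + 1 = c at hc
    have hβs : β = (c - 1) * s / 2 := by rw [← hcc]; field_simp; ring
    subst hβs
    field_simp
    constructor <;> intro H <;> linarith
  refine ⟨(u, fun p => 2 * (u p - φk p) / s - ψk p), ⟨fun p => ?_, fun p => ?_⟩, ?_⟩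
  · exact (e _ _ _ _).2 (hu p)
  · simp only []
    field_simp
    ring
  · rintro ⟨φn, ψn⟩ ⟨k1, k2⟩
    simp only at k1 k2
    have hψ : ∀ p, ψn p = 2 * (φn p - φk p) / s - ψk p := by
      intro p
      rw [k2 p]; field_simp; ring
    have hφ : φn = u := by
      refine huniq φn fun p => ?_
      refine (e _ _ _ _).1 ?_
      rw [← hψ p]
      exact k1 p
    subst hφ
    exact Prod.ext rfl (funext hψ)
end
end
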